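/- Let S be a type of system configurations, M a type of monitor states, R a binary relation on S, f : S → S → M → M a monitor-update function, init : S, and m0 : M. Define the monitored extension R' on S × M by R' (s, m) (s', m') iff R s s' and m' = f s s' m. If for every state s reachable from init under R any two R-successors of s are equal, then for every pair p reachable from (init, m0) under R' any two R'-successors of p are equal. (This is the abstract content of Theorem 2: equipping the composed model with a monitor object, whose attribute update in each transformed rule is determined by the underlying step, preserves absence of nondeterminism.) -/

import Mathlib

/-- The monitored extension of a relation `R` on `S` by a monitor-update function
`f : S → S → M → M`: `R' (s, m) (s', m')` iff `R s s'` and `m' = f s s' m`. -/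
def monitoredExt {S M : Type*} (R : S → S → Prop) (f : S → S → M → M) :
    S × M → S × M → Prop :=
  fun p q => R p.1 q.1 ∧ q.2 = f p.1 q.1 p.2

/-- Determinism of `R` at the single state `s`. Being local to a state, it can be required at the
reachable states only, unlike the global `Relator.RightUnique`. -/
def DeterministicAt {S : Type*} (R : S → S → Prop) (s : S) : Prop :=
  ∀ t t', R s t → R s t' → t = t'

namespace monitoredExt

variable {S M : Type*} {R : S → S → Prop} {f : S → S → M → M} {p q q' : S × M}

theorem reflTransGen_fst (h : Relation.ReflTransGen (monitoredExt R f) p q) :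
    Relation.ReflTransGen R p.1 q.1 :=
  h.lift Prod.fst fun _ _ hstep => hstep.1

theorem eq_of_fst_eq (hq : monitoredExt R f p q) (hq' : monitoredExt R f p q')
    (hfst : q.1 = q'.1) : q = q' := by
  refine Prod.ext hfst ?_
  calc
    q.2 = f p.1 q.1 p.2 := hq.2
    _ = f p.1 q'.1 p.2 := by rw [hfst]
    _ = q'.2 := hq'.2.symm

theorem deterministicAt (h : DeterministicAt R p.1) : DeterministicAt (monitoredExt R f) p :=
  fun q q' hq hq' => eq_of_fst_eq hq hq' (h q.1 q'.1 hq.1 hq'.1)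

end monitoredExt

/-- **Theorem 2 (abstract content).** If every state reachable from `init` under `R`
has deterministic `R`-successors, then every pair reachable from `(init, m0)` under the
monitored extension `R'` has deterministic `R'`-successors. -/
theorem monitored_preserves_and {S M : Type*} (R : S → S → Prop) (f : S → S → M → M)
    (init : S) (m0 : M)
    (h : ∀ s, Relation.ReflTransGen R init s → ∀ t t', R s t → R s t' → t = t') :
    ∀ p, Relation.ReflTransGen (monitoredExt R f) (init, m0) p →
      ∀ q q', monitoredExt R f p q → monitoredExt R f p q' → q = q' := by
  intro p hp
  have hreach : Relation.ReflTransGen R init p.1 := monitoredExt.reflTransGen_fst hp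
  have hdet : DeterministicAt R p.1 := h p.1 hreach
  exact monitoredExt.deterministicAt hdet
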